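/- arXiv:2402.01497 — 2 statements merged into one kernel-verified Lean document; each statement's English description precedes it below -/
import Mathlib

section
/- Let ℓ ∈ {1,2} and let u = (u₁,u₂,u₃,u₄) ∈ ℂ⁴ with Re(uᵢ) > 1/2 for each i. Then the absolutely convergent series D_ℓ(u) := Σ over quadruples (n₁,n₂,n₃,n₄) of odd positive integers with n₁n₂n₃n₄ a perfect square of n₁^{−u₁} n₂^{−u₂} n₃^{−u₃} n₄^{−u₄} ∏_{p | n₁n₂n₃n₄} g_ℓ(p) satisfies D_ℓ(u) = ( ∏_{1 ≤ i ≤ j ≤ 4} ζ₂(uᵢ + uⱼ) ) · H_ℓ(u). -/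
/-!
Put `f i n = n ^ (-u i)` for odd `n` and `f i n = 0` for even `n`. If the product of the `n i` is a
square, then a common refinement of two factorizations of its root gives
`n i = (∏ j, d i j) * ∏ j, d j i`, so the series is dominated by `∏ i, ∏ j, ∑ n, ‖f i n * f j n‖`,
which is finite as soon as `Re (u i + u j) > 1`. The weight depends only on `m = ∏ i, n i`, so
summing over the fibres of `n ↦ m` leaves the series of a multiplicative function: the weight times
the Dirichlet convolution of the `f i`. Its Euler factor at `p` is a sum over even exponents, the
average of products of geometric series at `f i p` and at `-f i p`. Multiplying it by
`∏ i ≤ j, (1 - f i p * f j p)`, the inverse Euler factor of `∏ i ≤ j, ζ₂(u i + u j)`, clears the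
denominators and leaves the Euler factor of `H_ℓ`.
-/

open scoped Classical

noncomputable section

/-- The Riemann zeta function with its Euler factor at 2 removed. -/
def zeta2 (s : ℂ) : ℂ := riemannZeta s * (1 - (2 : ℂ) ^ (-s))

/-- The combinatorial factor `C_p(u)`. -/
def Cp (p : ℕ) (u : Fin 4 → ℂ) : ℂ :=
  (∏ i : Fin 4, ∏ j : Fin 4, if i < j then 1 - (p : ℂ) ^ (-(u i + u j)) else 1) *
    ∑ A : Finset (Fin 4), if Even A.card then ∏ i ∈ A, (p : ℂ) ^ (-(u i)) else 0

/-- The Euler factor at `p` of the product defining `H_ℓ`. -/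
def Hfactor (g : ℕ → ℂ) (u : Fin 4 → ℂ) (p : ℕ) : ℂ :=
  (1 - g p) * (∏ i : Fin 4, ∏ j : Fin 4, if i ≤ j then 1 - (p : ℂ) ^ (-(u i + u j)) else 1) +
    g p * Cp p u

/-- The Euler product over odd primes. -/
def HEuler (g : ℕ → ℂ) (u : Fin 4 → ℂ) : ℂ :=
  ∏' p : {p : ℕ // p.Prime ∧ p ≠ 2}, Hfactor g u p.1

/-- `g_ℓ(p)`: equal to `1 - 1/p` for `ℓ = 1` and `1 - 1/(p+1)` for `ℓ = 2`. -/
def gl (ℓ : ℕ) (p : ℕ) : ℂ := if ℓ = 1 then 1 - 1 / (p : ℂ) else 1 - 1 / ((p : ℂ) + 1)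

/-- The summand of the Dirichlet series `D_ℓ(u)`: over quadruples of odd positive integers
whose product is a perfect square, `n₁^{-u₁}n₂^{-u₂}n₃^{-u₃}n₄^{-u₄} ∏_{p | n₁n₂n₃n₄} g_ℓ(p)`. -/
def Dterm (ℓ : ℕ) (u : Fin 4 → ℂ) (n : Fin 4 → ℕ) : ℂ :=
  if (∀ i, Odd (n i)) ∧ IsSquare (n 0 * n 1 * n 2 * n 3) then
    (∏ i, ((n i : ℕ) : ℂ) ^ (-u i)) *
      ∏ p ∈ (n 0 * n 1 * n 2 * n 3).primeFactors, gl ℓ p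
  else 0

section Refinement

variable {ι κ M : Type*}

lemma exists_dvd_and_prod_eq_of_dvd_prod [CommMonoid M] [DecompositionMonoid M] [Subsingleton Mˣ]
    {s : Finset ι} {a : ι → M} {x : M} (hx : x ∣ ∏ i ∈ s, a i) :
    ∃ b : ι → M, (∀ i ∈ s, b i ∣ a i) ∧ ∏ i ∈ s, b i = x := by
  induction s using Finset.cons_induction generalizing x with
  | empty => exact ⟨1, by simp, by simpa [isUnit_iff_eq_one, eq_comm] using isUnit_of_dvd_one hx⟩
  | cons i s hi ih =>
    rw [Finset.prod_cons] at hx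
    obtain ⟨y, z, hy, hz, rfl⟩ := exists_dvd_and_dvd_of_dvd_mul hx
    obtain ⟨b, hb, rfl⟩ := ih hz
    have hne : ∀ j ∈ s, j ≠ i := fun j hj => ne_of_mem_of_not_mem hj hi
    refine ⟨Function.update b i y, ?_, ?_⟩
    · simpa [hy] using fun j hj => by simpa [hne j hj] using hb j hj
    · rw [Finset.prod_cons, Function.update_self]
      exact congrArg (y * ·) (Finset.prod_congr rfl fun j hj => by simp [hne j hj])

variable [CommMonoidWithZero M] [IsCancelMulZero M] [DecompositionMonoid M] [Subsingleton Mˣ]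

lemma exists_common_refinement_of_prod_eq_prod [Fintype κ] {s : Finset ι} {a : ι → M} {b : κ → M}
    (h : ∏ i ∈ s, a i = ∏ j, b j) (h0 : ∏ j, b j ≠ 0) :
    ∃ d : ι → κ → M, (∀ i ∈ s, ∏ j, d i j = a i) ∧ ∀ j, ∏ i ∈ s, d i j = b j := by
  induction s using Finset.cons_induction generalizing b with
  | empty =>
    have hb (j) : IsUnit (b j) :=
      isUnit_of_dvd_one ((Finset.dvd_prod_of_mem b (Finset.mem_univ j)).trans h.symm.dvd)
    exact ⟨1, by simp, fun j => by simp [isUnit_iff_eq_one.mp (hb j)]⟩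
  | cons i s hi ih =>
    rw [Finset.prod_cons] at h
    obtain ⟨c, hc, hca⟩ := exists_dvd_and_prod_eq_of_dvd_prod (Dvd.intro _ h)
    choose b' hb' using fun j => hc j (Finset.mem_univ j)
    simp only [hb', Finset.prod_mul_distrib, hca] at h h0
    obtain ⟨d, hda, hdb⟩ :=
      ih (mul_left_cancel₀ (left_ne_zero_of_mul h0) h) (right_ne_zero_of_mul h0)
    have hne : ∀ j ∈ s, j ≠ i := fun j hj => ne_of_mem_of_not_mem hj hi
    refine ⟨Function.update d i c, ?_, fun j => ?_⟩
    · simpa [hca] using fun k hk => by simpa [hne k hk] using hda k hk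
    · rw [Finset.prod_cons, Function.update_self, hb', ← hdb]
      exact congrArg (c j * ·) (Finset.prod_congr rfl fun k hk => by simp [hne k hk])

lemma exists_prod_mul_prod_eq_of_isSquare_prod [Fintype ι] {n : ι → M}
    (hn : IsSquare (∏ i, n i)) (h0 : ∏ i, n i ≠ 0) :
    ∃ d : ι → ι → M, ∀ i, (∏ j, d i j) * ∏ j, d j i = n i := by
  obtain ⟨r, hr⟩ := hn
  obtain ⟨a, ha, har⟩ := exists_dvd_and_prod_eq_of_dvd_prod (Dvd.intro _ hr.symm)
  choose b hb using fun i => ha i (Finset.mem_univ i)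
  have hr0 : r ≠ 0 := left_ne_zero_of_mul (hr ▸ h0)
  have hbr : ∏ i, b i = r := by
    refine mul_left_cancel₀ hr0 ?_
    rw [← hr, ← har, ← Finset.prod_mul_distrib]
    exact Finset.prod_congr rfl fun i _ => (hb i).symm
  obtain ⟨d, hda, hdb⟩ :=
    exists_common_refinement_of_prod_eq_prod (har.trans hbr.symm) (hbr ▸ hr0)
  exact ⟨d, fun i => by rw [hda i (Finset.mem_univ i), hdb, hb]⟩

end Refinement

section Summability

variable {ι : Type*} [Fintype ι]

lemma summable_prod_apply_of_nonneg {β : ι → Type*} {f : ∀ i, β i → ℝ} (h0 : ∀ i b, 0 ≤ f i b)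
    (hf : ∀ i, Summable (f i)) : Summable fun b : ∀ i, β i => ∏ i, f i (b i) := by
  refine summable_of_sum_le (c := ∏ i, ∑' b, f i b)
    (fun b => Finset.prod_nonneg fun i _ => h0 i (b i)) fun s => ?_
  calc ∑ b ∈ s, ∏ i, f i (b i)
      ≤ ∑ b ∈ Fintype.piFinset fun i => s.image (· i), ∏ i, f i (b i) :=
        Finset.sum_le_sum_of_subset_of_nonneg
          (fun b hb => Fintype.mem_piFinset.mpr fun i => Finset.mem_image_of_mem _ hb)
          fun b _ _ => Finset.prod_nonneg fun i _ => h0 i (b i)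
    _ = ∏ i, ∑ x ∈ s.image (· i), f i x := (Finset.prod_univ_sum _ _).symm
    _ ≤ ∏ i, ∑' x, f i x :=
        Finset.prod_le_prod (fun i _ => Finset.sum_nonneg fun x _ => h0 i x)
          fun i _ => (hf i).sum_le_tsum _ fun x _ => h0 i x

lemma summable_of_summable_comp_of_support_subset_range {α β E : Type*} [NormedAddCommGroup E]
    [CompleteSpace E] {f : β → E} {φ : α → β} (h : Summable (f ∘ φ))
    (hf : Function.support f ⊆ Set.range φ) : Summable f := by
  have hsec : Summable fun b : Set.range φ => f b := by
    refine (h.comp_injective (Set.rangeSplitting_injective φ)).congr fun b => ?_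
    simp [Set.apply_rangeSplitting]
  refine (Function.Injective.summable_iff Subtype.val_injective ?_).mp hsec
  simpa using Function.support_subset_iff'.mp hf

variable {K : Type*} [NormedField K]

lemma summable_norm_prod_apply_of_isSquare {f : ι → ℕ →*₀ K}
    (hf : ∀ i j, Summable fun n => ‖(f i * f j) n‖) :
    Summable fun n : ι → ℕ => if IsSquare (∏ i, n i) then ‖∏ i, f i (n i)‖ else 0 := by
  let φ : (ι × ι → ℕ) → ι → ℕ := fun d i => (∏ j, d (i, j)) * ∏ j, d (j, i)
  have prod_φ (d : ι × ι → ℕ) : ∏ i, f i (φ d i) = ∏ ij, (f ij.1 * f ij.2) (d ij) := by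
    have mul_apply (ij : ι × ι) : (f ij.1 * f ij.2) (d ij) = f ij.1 (d ij) * f ij.2 (d ij) := rfl
    simp_rw [φ, map_mul, map_prod, mul_apply, Finset.prod_mul_distrib, Fintype.prod_prod_type]
    rw [Finset.prod_comm (f := fun i j => f i (d (j, i)))]
  have summable_φ : Summable fun d => ‖∏ i, f i (φ d i)‖ := by
    simp_rw [prod_φ, norm_prod]
    exact summable_prod_apply_of_nonneg (f := fun (ij : ι × ι) n => ‖(f ij.1 * f ij.2) n‖)
      (fun _ _ => norm_nonneg _) fun ij => hf ij.1 ij.2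
  refine summable_of_summable_comp_of_support_subset_range (φ := φ) ?_
    (Function.support_subset_iff.mpr fun n hn => ?_)
  · refine summable_φ.of_nonneg_of_le (fun d => ?_) fun d => ?_ <;>
      simp only [Function.comp_apply] <;> split_ifs <;> simp only [norm_nonneg, le_refl]
  · obtain ⟨hsq, h0⟩ : IsSquare (∏ i, n i) ∧ ∏ i, f i (n i) ≠ 0 := by
      simpa [-norm_prod] using hn
    have hn0 : ∏ i, n i ≠ 0 := by
      contrapose! h0
      obtain ⟨i, hi, hni⟩ := Finset.prod_eq_zero_iff.mp h0
      exact Finset.prod_eq_zero hi (by rw [hni, map_zero])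
    obtain ⟨d, hd⟩ := exists_prod_mul_prod_eq_of_isSquare_prod hsq hn0
    exact ⟨fun ij => d ij.1 ij.2, funext hd⟩

end Summability

section SquareWeight

lemma isSquare_mul_iff_of_coprime {m n : ℕ} (h : m.Coprime n) :
    IsSquare (m * n) ↔ IsSquare m ∧ IsSquare n := by
  refine ⟨fun hmn => ?_, fun ⟨hm, hn⟩ => hm.mul hn⟩
  simp_rw [isSquare_iff_exists_sq] at hmn ⊢
  obtain ⟨r, hr⟩ := hmn
  exact ⟨exists_eq_pow_of_mul_eq_pow (Nat.isUnit_iff.mpr h) hr,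
    exists_eq_pow_of_mul_eq_pow (Nat.isUnit_iff.mpr h.symm) (mul_comm m n ▸ hr)⟩

lemma isSquare_prime_pow_iff {p : ℕ} (hp : p.Prime) {k : ℕ} : IsSquare (p ^ k) ↔ Even k := by
  refine ⟨fun ⟨r, hr⟩ => ?_, fun hk => hk.isSquare_pow p⟩
  obtain ⟨m, -, rfl⟩ := (Nat.dvd_prime_pow hp).mp (Dvd.intro r hr.symm)
  exact ⟨m, Nat.pow_right_injective hp.two_le (by simpa only [pow_add] using hr)⟩

variable {R : Type*} [CommMonoidWithZero R]

/-- The arithmetic function supported on nonzero squares whose value at a square `m` is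
`∏_{p ∣ m} g p`. -/
def squareWeight (g : ℕ → R) : ArithmeticFunction R where
  toFun m := if m ≠ 0 ∧ IsSquare m then ∏ p ∈ m.primeFactors, g p else 0
  map_zero' := by simp

lemma squareWeight_apply (g : ℕ → R) {m : ℕ} (hm : m ≠ 0) :
    squareWeight g m = if IsSquare m then ∏ p ∈ m.primeFactors, g p else 0 := by
  simp [squareWeight, hm]

lemma isMultiplicative_squareWeight (g : ℕ → R) : (squareWeight g).IsMultiplicative := by
  refine ArithmeticFunction.IsMultiplicative.iff_ne_zero.mpr
    ⟨by simp [squareWeight_apply], fun {m n} hm hn hmn => ?_⟩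
  rw [squareWeight_apply g hm, squareWeight_apply g hn, squareWeight_apply g (mul_ne_zero hm hn),
    ite_zero_mul_ite_zero, hmn.primeFactors_mul, Finset.prod_union hmn.disjoint_primeFactors]
  simp only [isSquare_mul_iff_of_coprime hmn]

lemma squareWeight_prime_pow (g : ℕ → R) {p : ℕ} (hp : p.Prime) {k : ℕ} (hk : k ≠ 0) :
    squareWeight g (p ^ k) = if Even k then g p else 0 := by
  rw [squareWeight_apply g (pow_ne_zero k hp.ne_zero), Nat.primeFactors_prime_pow hk hp,
    Finset.prod_singleton]
  simp only [isSquare_prime_pow_iff hp]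

-- Detecting the parity of `k` by `1 + (-1) ^ k` turns a sum over even exponents into two power
-- series evaluated at `1` and `-1`; the term `k = 0` needs a correction as `g p` is absent there.
lemma squareWeight_prime_pow_eq_add {K : Type*} [Field K] [NeZero (2 : K)] (g : ℕ → K) {p : ℕ}
    (hp : p.Prime) (k : ℕ) :
    squareWeight g (p ^ k) = (if k = 0 then 1 - g p else 0) + g p / 2 * (1 + (-1) ^ k) := by
  have h2 : (2 : K) ≠ 0 := two_ne_zero
  rcases eq_or_ne k 0 with rfl | hk
  · rw [pow_zero, (isMultiplicative_squareWeight g).map_one]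
    simp only [if_true, pow_zero]
    field_simp
    ring
  · rw [squareWeight_prime_pow g hp hk, if_neg hk, zero_add]
    split_ifs with hk2
    · rw [hk2.neg_one_pow]
      field_simp
      ring
    · rw [(Nat.not_even_iff_odd.mp hk2).neg_one_pow]
      ring

lemma norm_squareWeight_le {K : Type*} [NormedField K] {g : ℕ → K}
    (hg : ∀ p, p.Prime → ‖g p‖ ≤ 1) (m : ℕ) :
    ‖squareWeight g m‖ ≤ if IsSquare m then 1 else 0 := by
  rcases eq_or_ne m 0 with rfl | hm
  · simp
  rw [squareWeight_apply g hm]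
  split_ifs
  · rw [norm_prod]
    exact Finset.prod_le_one (fun _ _ => norm_nonneg _)
      fun p hp => hg p (Nat.prime_of_mem_primeFactors hp)
  · rw [norm_zero]

end SquareWeight

section Convolution

lemma toArithmeticFunction_hom_apply {R : Type*} [MulZeroOneClass R] (f : ℕ →*₀ R) (n : ℕ) :
    toArithmeticFunction f n = f n := by
  simp +contextual [toArithmeticFunction, eq_comm]

lemma isMultiplicative_toArithmeticFunction_hom {R : Type*} [MonoidWithZero R] (f : ℕ →*₀ R) :
    (toArithmeticFunction f).IsMultiplicative := by
  simp [ArithmeticFunction.IsMultiplicative, toArithmeticFunction_hom_apply]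

variable {R : Type*} [CommSemiring R]

lemma finsetProd_apply_eq_sum_finMulAntidiag {d : ℕ} (a : Fin d → ArithmeticFunction R) (m : ℕ) :
    (∏ i, a i) m = ∑ n ∈ Nat.finMulAntidiag d m, ∏ i, a i (n i) := by
  induction d generalizing m with
  | zero =>
    rcases eq_or_ne m 1 with rfl | hm
    · simp [Nat.finMulAntidiag_one]
    · simp [Nat.finMulAntidiag_zero_left hm, ArithmeticFunction.one_apply_ne hm]
  | succ d ih =>
    rw [Fin.prod_univ_succ, ArithmeticFunction.mul_apply]
    simp_rw [ih, Finset.mul_sum, Fin.prod_univ_succ]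
    rw [Finset.sum_sigma']
    refine Finset.sum_nbij' (fun x => Fin.cons x.1.1 x.2)
      (fun n => ⟨(n 0, ∏ i, Fin.tail n i), Fin.tail n⟩) ?_ ?_ ?_ ?_ ?_
    · rintro ⟨⟨a, b⟩, n⟩ h
      simp only [Finset.mem_sigma, Nat.mem_divisorsAntidiagonal, Nat.mem_finMulAntidiag] at h
      simp [Nat.mem_finMulAntidiag, Fin.prod_univ_succ, h]
    · intro n h
      simp only [Nat.mem_finMulAntidiag, Fin.prod_univ_succ] at h
      have h0 : ∏ i : Fin d, n i.succ ≠ 0 := right_ne_zero_of_mul (h.1.trans_ne h.2)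
      simp [Nat.mem_finMulAntidiag, Fin.tail, h, h0]
    · rintro ⟨⟨a, b⟩, n⟩ h
      simp only [Finset.mem_sigma, Nat.mem_divisorsAntidiagonal, Nat.mem_finMulAntidiag] at h
      simp [h]
    · intro n _
      simp
    · simp

lemma mul_apply_prime_pow (a b : ArithmeticFunction R) {p : ℕ} (hp : p.Prime) (k : ℕ) :
    (a * b) (p ^ k) =
      ∑ ij ∈ Finset.HasAntidiagonal.antidiagonal k, a (p ^ ij.1) * b (p ^ ij.2) := by
  rw [ArithmeticFunction.mul_apply, Nat.sum_divisorsAntidiagonal (fun x y => a x * b y),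
    Nat.divisors_prime_pow hp, Finset.sum_map,
    Finset.Nat.sum_antidiagonal_eq_sum_range_succ fun i j => a (p ^ i) * b (p ^ j)]
  refine Finset.sum_congr rfl fun i hi => ?_
  simp [Nat.pow_div (Finset.mem_range_succ_iff.mp hi) hp.pos]

end Convolution

section PrimePower

variable {K : Type*} [NormedField K] [CompleteSpace K]

lemma summable_norm_and_hasSum_finsetProd_prime_pow {ι : Type*} (s : Finset ι)
    {f : ι → ℕ →*₀ K} {p : ℕ} (hp : p.Prime) {z : K} (hz : ∀ i ∈ s, ‖f i p * z‖ < 1) :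
    (Summable fun k => ‖(∏ i ∈ s, toArithmeticFunction (f i)) (p ^ k) * z ^ k‖) ∧
      HasSum (fun k => (∏ i ∈ s, toArithmeticFunction (f i)) (p ^ k) * z ^ k)
        (∏ i ∈ s, (1 - f i p * z)⁻¹) := by
  induction s using Finset.cons_induction with
  | empty =>
    have h (k : ℕ) (hk : k ≠ 0) : (1 : ArithmeticFunction K) (p ^ k) * z ^ k = 0 := by
      rw [ArithmeticFunction.one_apply_ne (Nat.one_lt_pow hk hp.one_lt).ne', zero_mul]
    constructor
    · exact summable_of_ne_finset_zero (s := {0}) fun k hk => by simp_all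
    · simpa using hasSum_single 0 h
  | cons i s hi ih =>
    obtain ⟨hs_summable, hs_sum⟩ := ih fun j hj => hz j (Finset.mem_cons_of_mem hj)
    have hi_lt := hz i (Finset.mem_cons_self i s)
    have hi_summable : Summable fun k => ‖(f i p * z) ^ k‖ := by
      simpa using summable_geometric_of_lt_one (norm_nonneg _) hi_lt
    have cauchy (k : ℕ) :
        (∏ j ∈ Finset.cons i s hi, toArithmeticFunction (f j)) (p ^ k) * z ^ k =
          ∑ ij ∈ Finset.HasAntidiagonal.antidiagonal k, (f i p * z) ^ ij.1 *
            ((∏ j ∈ s, toArithmeticFunction (f j)) (p ^ ij.2) * z ^ ij.2) := by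
      rw [Finset.prod_cons, mul_apply_prime_pow _ _ hp, Finset.sum_mul]
      refine Finset.sum_congr rfl fun ij hij => ?_
      rw [← Finset.HasAntidiagonal.mem_antidiagonal.mp hij, toArithmeticFunction_hom_apply,
        map_pow, mul_pow, pow_add]
      ring
    have h_summable := summable_norm_sum_mul_antidiagonal_of_summable_norm hi_summable hs_summable
    simp_rw [cauchy, Finset.prod_cons]
    refine ⟨h_summable, ?_⟩
    rw [← tsum_geometric_of_norm_lt_one hi_lt, ← hs_sum.tsum_eq,
      tsum_mul_tsum_eq_tsum_sum_antidiagonal_of_summable_norm hi_summable hs_summable]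
    exact h_summable.of_norm.hasSum

lemma hasSum_squareWeight_mul_finsetProd_prime_pow [NeZero (2 : K)] {ι : Type*} [Fintype ι]
    (g : ℕ → K) {f : ι → ℕ →*₀ K} {p : ℕ} (hp : p.Prime) (hf : ∀ i, ‖f i p‖ < 1) :
    HasSum (fun k => squareWeight g (p ^ k) * (∏ i, toArithmeticFunction (f i)) (p ^ k))
      ((1 - g p) + g p / 2 * (∏ i, (1 - f i p)⁻¹ + ∏ i, (1 + f i p)⁻¹)) := by
  have h_mult : (∏ i, toArithmeticFunction (f i)).IsMultiplicative :=
    ArithmeticFunction.isMultiplicative_finsetProd _ _ fun i _ =>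
      isMultiplicative_toArithmeticFunction_hom (f i)
  have h_one := (summable_norm_and_hasSum_finsetProd_prime_pow (.univ : Finset ι) (z := (1 : K)) hp
    (by simpa using hf)).2
  have h_neg_one := (summable_norm_and_hasSum_finsetProd_prime_pow (.univ : Finset ι)
    (z := (-1 : K)) hp (by simpa using hf)).2
  convert (hasSum_ite_eq 0 (1 - g p)).add ((h_one.add h_neg_one).mul_left (g p / 2)) using 1
  · funext k
    rw [squareWeight_prime_pow_eq_add g hp]
    rcases eq_or_ne k 0 with rfl | hk
    · simp [h_mult.map_one]
    · simp only [hk, if_false, one_pow]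
      ring
  · simp

end PrimePower

section EulerFactor

variable {ι R : Type*} [Fintype ι]

lemma two_mul_sum_ite_even_card [CommRing R] (x : ι → R) :
    2 * ∑ A : Finset ι, (if Even A.card then ∏ i ∈ A, x i else 0) =
      ∏ i, (1 - x i) + ∏ i, (1 + x i) := by
  simp_rw [sub_eq_add_neg, Finset.prod_one_add, Finset.powerset_univ, Finset.mul_sum,
    ← Finset.sum_add_distrib, Finset.prod_neg]
  refine Finset.sum_congr rfl fun A _ => ?_
  split_ifs with hA
  · rw [hA.neg_one_pow, one_mul, two_mul]
  · rw [(Nat.not_even_iff_odd.mp hA).neg_one_pow, mul_zero, neg_one_mul, neg_add_cancel]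

variable [LinearOrder ι]

lemma prod_prod_ite_le [CommMonoid R] (F : ι → ι → R) :
    (∏ i, ∏ j, if i ≤ j then F i j else 1) =
      (∏ i, F i i) * ∏ i, ∏ j, if i < j then F i j else 1 := by
  rw [← Finset.prod_mul_distrib]
  refine Finset.prod_congr rfl fun i _ => ?_
  have diag : F i i = ∏ j, if i = j then F i j else 1 := by simp
  rw [diag, ← Finset.prod_mul_distrib]
  refine Finset.prod_congr rfl fun j _ => ?_
  rcases lt_trichotomy i j with h | rfl | h
  · simp [h, h.le, h.ne]
  · simp
  · simp [h.not_ge, h.not_gt, h.ne']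

/-- The local factor of `H_ℓ` at a prime, as a polynomial in the values `x i` of the completely
multiplicative functions and the value `c` of the weight at that prime. -/
def eulerFactor [CommRing R] (c : R) (x : ι → R) : R :=
  (1 - c) * (∏ i, ∏ j, if i ≤ j then 1 - x i * x j else 1) +
    c * ((∏ i, ∏ j, if i < j then 1 - x i * x j else 1) *
      ∑ A : Finset ι, if Even A.card then ∏ i ∈ A, x i else 0)

lemma eulerFactor_zero [CommRing R] (c : R) : eulerFactor c (0 : ι → R) = 1 := by
  have even_sum :
      (∑ A : Finset ι, if Even A.card then ∏ i ∈ A, (0 : ι → R) i else 0) = 1 := by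
    rw [Finset.sum_eq_single ∅ (fun A _ hA => ?_) (by simp)]
    · simp
    · obtain ⟨i, hi⟩ := Finset.nonempty_iff_ne_empty.mpr hA
      rw [Finset.prod_eq_zero hi rfl, ite_self]
  rw [eulerFactor, even_sum]
  simp

lemma mul_prod_prod_eq_eulerFactor [Field R] [NeZero (2 : R)] (c : R) {x : ι → R}
    (hsub : ∀ i, 1 - x i ≠ 0) (hadd : ∀ i, 1 + x i ≠ 0) :
    ((1 - c) + c / 2 * (∏ i, (1 - x i)⁻¹ + ∏ i, (1 + x i)⁻¹)) *
        (∏ i, ∏ j, if i ≤ j then 1 - x i * x j else 1) =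
      eulerFactor c x := by
  have h2 : (2 : R) ≠ 0 := two_ne_zero
  have hsub' : ∏ i, (1 - x i) ≠ 0 := Finset.prod_ne_zero_iff.mpr fun i _ => hsub i
  have hadd' : ∏ i, (1 + x i) ≠ 0 := Finset.prod_ne_zero_iff.mpr fun i _ => hadd i
  have diag : ∏ i, (1 - x i * x i) = (∏ i, (1 - x i)) * ∏ i, (1 + x i) := by
    rw [← Finset.prod_mul_distrib]
    exact Finset.prod_congr rfl fun i _ => by ring
  have even_sum := eq_div_of_mul_eq h2 ((mul_comm _ _).trans (two_mul_sum_ite_even_card x))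
  rw [eulerFactor, prod_prod_ite_le, diag, even_sum, Finset.prod_inv_distrib,
    Finset.prod_inv_distrib]
  field_simp
  ring

end EulerFactor

section SquareProdTerm

variable {K : Type*} [NormedField K] {d : ℕ} {f : Fin d → ℕ →*₀ K} {g : ℕ → K}

/-- The summand of `D_ℓ(u)`, with arbitrary completely multiplicative functions `f i` in place of
the functions `n ↦ n ^ (-u i)` on odd `n`. -/
def squareProdTerm (f : Fin d → ℕ →*₀ K) (g : ℕ → K) (n : Fin d → ℕ) : K :=
  squareWeight g (∏ i, n i) * ∏ i, f i (n i)

lemma summable_norm_squareProdTerm (hf : ∀ i j, Summable fun n => ‖(f i * f j) n‖)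
    (hg : ∀ p, p.Prime → ‖g p‖ ≤ 1) : Summable fun n => ‖squareProdTerm f g n‖ := by
  refine (summable_norm_prod_apply_of_isSquare hf).of_nonneg_of_le (fun _ => norm_nonneg _)
    fun n => ?_
  rw [squareProdTerm, norm_mul]
  refine (mul_le_mul_of_nonneg_right (norm_squareWeight_le hg _) (norm_nonneg _)).trans_eq ?_
  rw [ite_mul, one_mul, zero_mul]

lemma tsum_fiber_squareProdTerm (f : Fin d → ℕ →*₀ K) (g : ℕ → K) (m : ℕ) :
    ∑' n : (fun n : Fin d → ℕ => ∏ i, n i) ⁻¹' {m}, squareProdTerm f g n =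
      (squareWeight g).pmul (∏ i, toArithmeticFunction (f i)) m := by
  have fiber (n : (fun n : Fin d → ℕ => ∏ i, n i) ⁻¹' {m}) :
      squareProdTerm f g n = squareWeight g m * ∏ i, f i (n.1 i) := by
    rw [squareProdTerm, show ∏ i, n.1 i = m from n.2]
  simp_rw [fiber, tsum_mul_left, ArithmeticFunction.pmul_apply]
  rcases eq_or_ne m 0 with rfl | hm
  · simp
  have fiber_eq : (fun n : Fin d → ℕ => ∏ i, n i) ⁻¹' {m} = Nat.finMulAntidiag d m := by
    ext n
    simp [Nat.mem_finMulAntidiag, hm]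
  rw [fiber_eq, Finset.tsum_subtype' _ fun n : Fin d → ℕ => ∏ i, f i (n i),
    finsetProd_apply_eq_sum_finMulAntidiag]
  simp_rw [toArithmeticFunction_hom_apply]

end SquareProdTerm

section EulerProduct

variable {K : Type*} [NormedField K] [CompleteSpace K]

lemma tsum_ne_zero_of_summable_norm {h : ℕ →*₀ K} (hh : Summable fun n => ‖h n‖) :
    ∑' n, h n ≠ 0 := by
  have summable_primes : Summable fun p : Nat.Primes => ‖-h p‖ := by
    simp_rw [norm_neg]
    exact hh.comp_injective Nat.Primes.coe_nat_injective
  obtain ⟨M, hM⟩ : Multipliable fun p : Nat.Primes => 1 - h p := by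
    simpa only [sub_eq_add_neg] using multipliable_one_add_of_summable summable_primes
  have cancel (p : Nat.Primes) : (1 - h p) * (1 - h p)⁻¹ = 1 :=
    mul_inv_cancel₀ (isUnit_one_sub_of_norm_lt_one
      (hh.of_norm.norm_lt_one (f := h.toMonoidHom) p.2.one_lt)).ne_zero
  have h_mul := hM.mul (EulerProduct.eulerProduct_completely_multiplicative_hasProd hh)
  simp_rw [cancel] at h_mul
  exact right_ne_zero_of_mul_eq_one (h_mul.unique hasProd_one)

lemma hasProd_one_sub {h : ℕ →*₀ K} (hh : Summable fun n => ‖h n‖) :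
    HasProd (fun p : Nat.Primes => 1 - h p) (∑' n, h n)⁻¹ := by
  simpa only [inv_inv] using (EulerProduct.eulerProduct_completely_multiplicative_hasProd hh).inv₀
    (tsum_ne_zero_of_summable_norm hh)

variable {d : ℕ} {f : Fin d → ℕ →*₀ K} {g : ℕ → K}

lemma norm_apply_prime_lt_one (hf : ∀ i j, Summable fun n => ‖(f i * f j) n‖) (i : Fin d) {p : ℕ}
    (hp : p.Prime) : ‖f i p‖ < 1 := by
  have h := (hf i i).of_norm.norm_lt_one (f := (f i * f i : ℕ →*₀ K).toMonoidHom) hp.one_lt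
  have h' : ‖f i p‖ * ‖f i p‖ < 1 := by rwa [← norm_mul]
  nlinarith [norm_nonneg (f i p)]

lemma hasProd_tsum_squareProdTerm [NeZero (2 : K)]
    (hf : ∀ i j, Summable fun n => ‖(f i * f j) n‖) (hg : ∀ p, p.Prime → ‖g p‖ ≤ 1) :
    HasProd (fun p : Nat.Primes =>
        (1 - g p) + g p / 2 * (∏ i, (1 - f i p)⁻¹ + ∏ i, (1 + f i p)⁻¹))
      (∑' n, squareProdTerm f g n) := by
  have hsum := summable_norm_squareProdTerm hf hg
  have h_fiber := hsum.of_norm.hasSum.tsum_fiberwise (fun n : Fin d → ℕ => ∏ i, n i)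
  have h_norm := (hsum.hasSum.tsum_fiberwise (fun n : Fin d → ℕ => ∏ i, n i)).summable
  simp_rw [tsum_fiber_squareProdTerm] at h_fiber
  have h_mult : ((squareWeight g).pmul (∏ i, toArithmeticFunction (f i))).IsMultiplicative :=
    (isMultiplicative_squareWeight g).pmul <|
      ArithmeticFunction.isMultiplicative_finsetProd _ _ fun i _ =>
        isMultiplicative_toArithmeticFunction_hom (f i)
  have h_abs : Summable fun m =>
      ‖(squareWeight g).pmul (∏ i, toArithmeticFunction (f i)) m‖ := by
    refine h_norm.of_nonneg_of_le (fun _ => norm_nonneg _) fun m => ?_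
    rw [← tsum_fiber_squareProdTerm]
    exact norm_tsum_le_tsum_norm (hsum.subtype _)
  rw [← h_fiber.tsum_eq]
  convert h_mult.eulerProduct_hasProd h_abs with p
  exact (hasSum_squareWeight_mul_finsetProd_prime_pow g p.2
    fun i => norm_apply_prime_lt_one hf i p.2).tsum_eq.symm

theorem D_factorization_general [NeZero (2 : K)]
    (hf : ∀ i j, Summable fun n => ‖(f i * f j) n‖) (hg : ∀ p, p.Prime → ‖g p‖ ≤ 1) :
    Summable (squareProdTerm f g) ∧
    ∑' n, squareProdTerm f g n =
      (∏ i, ∏ j, if i ≤ j then ∑' n, (f i * f j) n else 1) *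
        ∏' p : Nat.Primes, eulerFactor (g p) fun i => f i p := by
  refine ⟨(summable_norm_squareProdTerm hf hg).of_norm, ?_⟩
  have hL_inv : HasProd
      (fun p : Nat.Primes => ∏ i, ∏ j, if i ≤ j then 1 - f i p * f j p else 1)
      (∏ i, ∏ j, if i ≤ j then ∑' n, (f i * f j) n else 1)⁻¹ := by
    simp_rw [← Finset.prod_inv_distrib, apply_ite Inv.inv, inv_one]
    refine hasProd_prod fun i _ => hasProd_prod fun j _ => ?_
    split_ifs
    · exact hasProd_one_sub (hf i j)
    · exact hasProd_one
  have hL_ne : (∏ i, ∏ j, if i ≤ j then ∑' n, (f i * f j) n else 1) ≠ 0 := by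
    simp_rw [Finset.prod_ne_zero_iff]
    intro i _ j _
    split_ifs
    · exact tsum_ne_zero_of_summable_norm (hf i j)
    · exact one_ne_zero
  have norm_lt_one (i) (p : Nat.Primes) := norm_apply_prime_lt_one hf i p.2
  have local_factor (p : Nat.Primes) := mul_prod_prod_eq_eulerFactor (g p) (x := fun i => f i p)
    (fun i => (isUnit_one_sub_of_norm_lt_one (norm_lt_one i p)).ne_zero) fun i => by
      simpa using (isUnit_one_sub_of_norm_lt_one ((norm_neg _).trans_lt (norm_lt_one i p))).ne_zero
  have hH := (hasProd_tsum_squareProdTerm hf hg).mul hL_inv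
  simp_rw [local_factor] at hH
  rw [hH.tprod_eq, mul_comm, inv_mul_cancel_right₀ hL_ne]

end EulerProduct

section Specialization

/-- The function equal to `n ^ (-s)` at odd `n` and to `0` at even `n`. It is encoded
through the trivial character modulo `2`, so that its sum is a Dirichlet `L`-function. -/
def oddCpowHom {s : ℂ} (hs : s ≠ 0) : ℕ →*₀ ℂ :=
  dirichletSummandHom (1 : DirichletCharacter ℂ 2) hs

lemma oddCpowHom_apply {s : ℂ} (hs : s ≠ 0) (n : ℕ) :
    oddCpowHom hs n = if Odd n then (n : ℂ) ^ (-s) else 0 := by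
  have isUnit_iff : IsUnit (n : ZMod 2) ↔ Odd n := by
    rw [ZMod.isUnit_iff_coprime, Nat.coprime_two_right]
  change (1 : DirichletCharacter ℂ 2) n * (n : ℂ) ^ (-s) = _
  split_ifs with hn
  · rw [MulChar.one_apply (isUnit_iff.mpr hn), one_mul]
  · rw [MulChar.map_nonunit _ (isUnit_iff.not.mpr hn), zero_mul]

lemma oddCpowHom_mul {s t : ℂ} (hs : s ≠ 0) (ht : t ≠ 0) (hst : s + t ≠ 0) :
    oddCpowHom hs * oddCpowHom ht = oddCpowHom hst := by
  ext n
  change oddCpowHom hs n * oddCpowHom ht n = _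
  simp_rw [oddCpowHom_apply, ite_zero_mul_ite_zero, and_self]
  refine if_ctx_congr Iff.rfl (fun hn => ?_) fun _ => rfl
  rw [neg_add, Complex.cpow_add _ _ (Nat.cast_ne_zero.mpr hn.pos.ne')]

lemma summable_norm_oddCpowHom {s : ℂ} (hs : 1 < s.re) :
    Summable fun n => ‖oddCpowHom (Complex.ne_zero_of_one_lt_re hs) n‖ :=
  summable_dirichletSummand 1 hs

lemma tsum_oddCpowHom {s : ℂ} (hs : 1 < s.re) :
    ∑' n, oddCpowHom (Complex.ne_zero_of_one_lt_re hs) n = zeta2 s := by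
  have hs1 : s ≠ 1 := by
    rintro rfl
    simp at hs
  calc ∑' n, oddCpowHom (Complex.ne_zero_of_one_lt_re hs) n
      = LSeries (fun n => (1 : DirichletCharacter ℂ 2) n) s := tsum_dirichletSummand 1 hs
    _ = DirichletCharacter.LFunctionTrivChar 2 s :=
        (DirichletCharacter.LFunction_eq_LSeries 1 hs).symm
    _ = zeta2 s := by
        rw [DirichletCharacter.LFunctionTrivChar_eq_mul_riemannZeta hs1, zeta2, mul_comm,
          Nat.prime_two.primeFactors, Finset.prod_singleton, Nat.cast_ofNat]

lemma norm_one_sub_one_div_le_one {x : ℝ} (hx : 1 ≤ x) : ‖1 - 1 / (x : ℂ)‖ ≤ 1 := by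
  have h : 1 / x ≤ 1 := (div_le_one (by linarith)).mpr hx
  have h0 : 0 ≤ 1 / x := by positivity
  rw [← Complex.ofReal_one, ← Complex.ofReal_div, ← Complex.ofReal_sub, Complex.norm_real,
    Real.norm_of_nonneg (by linarith)]
  linarith

lemma norm_gl_le_one (ℓ : ℕ) {p : ℕ} (hp : p.Prime) : ‖gl ℓ p‖ ≤ 1 := by
  have hp1 : (1 : ℝ) ≤ p := by exact_mod_cast hp.one_le
  unfold gl
  split_ifs
  · simpa using norm_one_sub_one_div_le_one hp1
  · simpa using norm_one_sub_one_div_le_one (x := p + 1) (by linarith)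

variable {u : Fin 4 → ℂ}

lemma Dterm_eq_squareProdTerm (ℓ : ℕ) (hu : ∀ i, u i ≠ 0) :
    Dterm ℓ u = squareProdTerm (fun i => oddCpowHom (hu i)) (gl ℓ) := by
  funext n
  rw [Dterm, squareProdTerm, ← Fin.prod_univ_four]
  simp_rw [oddCpowHom_apply]
  by_cases hodd : ∀ i, Odd (n i)
  · have hn : ∏ i, n i ≠ 0 := Finset.prod_ne_zero_iff.mpr fun i _ => (hodd i).pos.ne'
    simp [hodd, squareWeight_apply _ hn, mul_comm]
  · obtain ⟨i, hi⟩ := not_forall.mp hodd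
    rw [if_neg fun h => hodd h.1]
    exact (mul_eq_zero_of_right _ (Finset.prod_eq_zero (Finset.mem_univ i) (if_neg hi))).symm

lemma eulerFactor_eq_Hfactor (g : ℕ → ℂ) (hu : ∀ i, u i ≠ 0) {p : ℕ} (hp : Odd p) :
    eulerFactor (g p) (fun i => oddCpowHom (hu i) p) = Hfactor g u p := by
  have hp0 : (p : ℂ) ≠ 0 := Nat.cast_ne_zero.mpr hp.pos.ne'
  simp_rw [oddCpowHom_apply, if_pos hp, eulerFactor, Hfactor, Cp, neg_add,
    Complex.cpow_add _ _ hp0]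

lemma tprod_eulerFactor_eq_HEuler (g : ℕ → ℂ) (hu : ∀ i, u i ≠ 0) :
    ∏' p : Nat.Primes, eulerFactor (g p) (fun i => oddCpowHom (hu i) p) =
      HEuler g u := by
  let incl (p : {p : ℕ // p.Prime ∧ p ≠ 2}) : Nat.Primes := ⟨p, p.2.1⟩
  have incl_injective : Function.Injective incl := fun p q h =>
    Subtype.ext (congrArg (fun r : Nat.Primes => (r : ℕ)) h)
  rw [HEuler, ← incl_injective.tprod_eq]
  · exact tprod_congr fun p => eulerFactor_eq_Hfactor g hu (p.2.1.odd_of_ne_two p.2.2)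
  · rw [Function.mulSupport_subset_iff']
    intro p hp
    have hp2 : (p : ℕ) = 2 := by
      by_contra h
      exact hp ⟨⟨p, p.2, h⟩, rfl⟩
    have h_zero : (fun i => oddCpowHom (hu i) p) = (0 : Fin 4 → ℂ) := by
      funext i
      rw [oddCpowHom_apply, hp2, if_neg (by decide), Pi.zero_apply]
    rw [h_zero, eulerFactor_zero]

end Specialization

theorem D_factorization (ℓ : ℕ) (hℓ : ℓ = 1 ∨ ℓ = 2) (u : Fin 4 → ℂ)
    (hu : ∀ i, 1 / 2 < (u i).re) :
    Summable (Dterm ℓ u) ∧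
    (∑' n : Fin 4 → ℕ, Dterm ℓ u n) =
      (∏ i : Fin 4, ∏ j : Fin 4, if i ≤ j then zeta2 (u i + u j) else 1) *
        HEuler (gl ℓ) u := by
  have hre (i j) : 1 < (u i + u j).re := by
    rw [Complex.add_re]
    linarith [hu i, hu j]
  have hu0 (i) : u i ≠ 0 := fun h => (hre i i).not_gt (by simp [h])
  have f_mul (i j) : oddCpowHom (hu0 i) * oddCpowHom (hu0 j) = oddCpowHom _ :=
    oddCpowHom_mul (hu0 i) (hu0 j) (Complex.ne_zero_of_one_lt_re (hre i j))
  have f_summable (i j) : Summable fun n => ‖(oddCpowHom (hu0 i) * oddCpowHom (hu0 j)) n‖ := by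
    simpa only [f_mul] using summable_norm_oddCpowHom (hre i j)
  obtain ⟨summable_D, tsum_D⟩ :=
    D_factorization_general f_summable fun _ hp => norm_gl_le_one ℓ hp
  rw [tprod_eulerFactor_eq_HEuler] at tsum_D
  rw [Dterm_eq_squareProdTerm ℓ hu0]
  simpa only [f_mul, tsum_oddCpowHom (hre _ _)] using And.intro summable_D tsum_D
end
end

section
/- Let p be an odd prime and let z₁, z₂, z₃, z₄ ∈ ℂ with −1/2 < Re(z₁) < 1/2 and Re(zᵢ) > −1/2 for i = 2,3,4. Set w := (−z₁, z₂, z₃, z₄) and v := (1/2+w₁, 1/2+w₂, 1/2+w₃, 1/2+w₄) = (1/2−z₁, 1/2+z₂, 1/2+z₃, 1/2+z₄). Then (1 − 1/p) · (1 − p^{−(1−2z₁)})^{−1} · ∏_{1 ≤ i ≤ j ≤ 4} (1 − p^{−(vᵢ+vⱼ)}) · [ 1/p + (1 − 1/p) B_p(1/2+z₁, 1/2+z₂, 1/2+z₃, 1/2+z₄; 0) + (1 − p^{−2z₁}) p^{−(1/2−z₁)} B_p(1/2+z₁, 1/2+z₂, 1/2+z₃, 1/2+z₄; 1) − p^{−(2−2z₁)}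 ] = (1 − p^{−2}) · [ (1 − g₂(p)) ∏_{1 ≤ i ≤ j ≤ 4} (1 − p^{−(vᵢ+vⱼ)}) + g₂(p) C_p(v) ]. (This is the Euler-factor form, at the odd prime p, of the identity Z₄(1/2, 1/2+z₂−z₁, 1/2+z₃−z₁, 1/2+z₄−z₁, z₁) = (8/π²) H₂(1/2−z₁, 1/2+z₂, 1/2+z₃, 1/2+z₄); note ∏_{p odd}(1 − p^{−2}) = 8/π².) -/
open scoped Classical

noncomputable section

/-- `Bp p u a` is the sum of `p^{-(n₁u₁+n₂u₂+n₃u₃+n₄u₄)}` over quadruples of nonnegative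
integers with `n₁+n₂+n₃+n₄ ≡ a (mod 2)`. -/
def Bp (p : ℕ) (u : Fin 4 → ℂ) (a : ℕ) : ℂ :=
  ∑' n : Fin 4 → ℕ,
    if (∑ i, n i) % 2 = a % 2 then (p : ℂ) ^ (-(∑ i, (n i : ℂ) * u i)) else 0

/-- `g₂(p) = 1 - 1/(p+1)`. -/
def g2fun (p : ℕ) : ℂ := 1 - 1 / ((p : ℂ) + 1)

/-!
Write `x = p^{-u₀}` and `y = p^{-c}`. Averaging over signs gives `B_p(u; 0)` and `B_p(u; 1)` as half
the sum and half the difference of `∏ (1 - p^{-uᵢ})⁻¹` and `∏ (1 + p^{-uᵢ})⁻¹`. Since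
`1 - xy ± (y - x) = (1 ∓ x)(1 ± y)`, the combination `(1 - xy) B_p(u; 0) + (y - x) B_p(u; 1)` trades
the factors `(1 ∓ x)⁻¹` for `1 ± y`. Multiplying by the diagonal factors `1 - p^{-2uᵢ}` for `i ≠ 0`
inverts the remaining ones, which leaves the sum over even subsets in `C_p` at `(c, u₁, u₂, u₃)`.
The theorem is the case `u = 1/2 + z`, `c = 1 - u₀`, in which `xy = 1/p`.
-/

section ProductOfSeries

variable {κ R : Type*} [NormedCommRing R]

theorem summable_norm_prod_pi {ι : Type*} [hι : Fintype ι] (f : ι → κ → R)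
    (hf : ∀ i, Summable fun k => ‖f i k‖) :
    Summable fun n : ι → κ => ‖∏ i, f i (n i)‖ := by
  revert hf f
  refine Fintype.induction_empty_option ?_ ?_ ?_ ι (h_fintype := hι)
  · intro α β _ e ih f hf
    let _ := Fintype.ofEquiv β e.symm
    rw [← (e.arrowCongr (Equiv.refl κ)).summable_iff]
    refine (ih _ fun i => hf (e i)).congr fun n => ?_
    simp [← e.prod_comp]
  · exact fun _ _ => Summable.of_finite
  · intro α _ ih f hf
    rw [← (Equiv.piOptionEquivProd (β := fun _ => κ)).symm.summable_iff]
    refine ((hf none).mul_norm (ih _ fun i => hf (some i))).congr fun n => ?_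
    simp [Fintype.prod_option, Equiv.piOptionEquivProd]

theorem tsum_prod_pi [CompleteSpace R] {ι : Type*} [hι : Fintype ι] (f : ι → κ → R)
    (hf : ∀ i, Summable fun k => ‖f i k‖) :
    ∑' n : ι → κ, ∏ i, f i (n i) = ∏ i, ∑' k, f i k := by
  revert hf f
  refine Fintype.induction_empty_option ?_ ?_ ?_ ι (h_fintype := hι)
  · intro α β _ e ih f hf
    let _ := Fintype.ofEquiv β e.symm
    rw [← (e.arrowCongr (Equiv.refl κ)).tsum_eq, ← e.prod_comp, ← ih _ fun i => hf (e i)]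
    simp [← e.prod_comp]
  · simp
  · intro α _ ih f hf
    rw [← (Equiv.piOptionEquivProd (β := fun _ => κ)).symm.tsum_eq, Fintype.prod_option,
      ← ih _ fun i => hf (some i), tsum_mul_tsum_of_summable_norm (hf none)
        (summable_norm_prod_pi _ fun i => hf (some i))]
    simp [Fintype.prod_option, Equiv.piOptionEquivProd]

end ProductOfSeries

theorem hasSum_prod_pow {ι 𝕜 : Type*} [Fintype ι] [NormedField 𝕜] [CompleteSpace 𝕜] {x : ι → 𝕜}
    (hx : ∀ i, ‖x i‖ < 1) :
    HasSum (fun n : ι → ℕ => ∏ i, x i ^ n i) (∏ i, (1 - x i)⁻¹) := by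
  have hsum : ∀ i, Summable fun k : ℕ => ‖x i ^ k‖ := fun i =>
    summable_norm_geometric_of_norm_lt_one (hx i)
  simp only [← tsum_geometric_of_norm_lt_one (hx _), ← tsum_prod_pi _ hsum]
  exact (summable_norm_prod_pi _ hsum).of_norm.hasSum

section Parity

variable {K : Type*} [Field K] [NeZero (2 : K)]

theorem ite_mod_two_eq_half_add (m a : ℕ) (c : K) :
    (if m % 2 = a % 2 then c else 0) = (c + (-1) ^ a * ((-1) ^ m * c)) / 2 := by
  rw [← mul_assoc, ← pow_add]
  split_ifs with h
  · rw [Even.neg_one_pow (by grind), one_mul, add_self_div_two]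
  · rw [Odd.neg_one_pow (by grind)]
    ring

theorem sum_even_card_prod {ι : Type*} [Fintype ι] (y : ι → K) :
    (∑ A : Finset ι, if Even A.card then ∏ i ∈ A, y i else 0) =
      (∏ i, (1 + y i) + ∏ i, (1 - y i)) / 2 := by
  simp only [sub_eq_add_neg, Finset.prod_one_add, Finset.powerset_univ, Finset.prod_neg,
    ← Finset.sum_add_distrib, Finset.sum_div, Nat.even_iff]
  exact Finset.sum_congr rfl fun A _ => by
    simpa only [pow_zero, one_mul] using ite_mod_two_eq_half_add A.card 0 (∏ i ∈ A, y i)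

end Parity

theorem hasSum_prod_pow_of_sum_mod_two {ι 𝕜 : Type*} [Fintype ι] [NormedField 𝕜]
    [CompleteSpace 𝕜] [NeZero (2 : 𝕜)] {x : ι → 𝕜} (hx : ∀ i, ‖x i‖ < 1) (a : ℕ) :
    HasSum (fun n : ι → ℕ => if (∑ i, n i) % 2 = a % 2 then ∏ i, x i ^ n i else 0)
      ((∏ i, (1 - x i)⁻¹ + (-1) ^ a * ∏ i, (1 + x i)⁻¹) / 2) := by
  have hneg : HasSum (fun n : ι → ℕ => (-1) ^ (∑ i, n i) * ∏ i, x i ^ n i)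
      (∏ i, (1 + x i)⁻¹) := by
    have h := hasSum_prod_pow (x := fun i => -x i) (by simpa using hx)
    simpa only [sub_neg_eq_add, neg_pow (x _), Finset.prod_mul_distrib,
      Finset.prod_pow_eq_pow_sum] using h
  simp only [ite_mod_two_eq_half_add]
  exact ((hasSum_prod_pow hx).add (hneg.mul_left _)).div_const 2

theorem prod_ite_le_eq_prod_ite_lt_mul_prod_diag {ι M : Type*} [Fintype ι] [PartialOrder ι]
    [DecidableLE ι] [DecidableLT ι] [CommMonoid M] (F : ι → ι → M) :
    (∏ i, ∏ j, if i ≤ j then F i j else 1) =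
      (∏ i, ∏ j, if i < j then F i j else 1) * ∏ i, F i i := by
  have hsplit (i j : ι) : (if i ≤ j then F i j else 1) =
      (if i < j then F i j else 1) * if i = j then F i j else 1 := by
    rcases eq_or_ne i j with rfl | hij
    · simp
    · simp [hij, lt_iff_le_and_ne]
  simp only [hsplit, Finset.prod_mul_distrib, Finset.prod_ite_eq, Finset.mem_univ, if_true]

section CpowNeg

variable {b : ℂ}

theorem cpow_neg_add (hb : b ≠ 0) (s t : ℂ) : b ^ (-(s + t)) = b ^ (-s) * b ^ (-t) := by
  rw [neg_add, Complex.cpow_add _ _ hb]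

theorem cpow_neg_sum_mul {ι : Type*} (hb : b ≠ 0) (s : Finset ι) (n : ι → ℕ) (u : ι → ℂ) :
    b ^ (-∑ i ∈ s, (n i : ℂ) * u i) = ∏ i ∈ s, (b ^ (-u i)) ^ n i := by
  simp only [Complex.cpow_def_of_ne_zero hb, ← Complex.exp_nat_mul, ← Complex.exp_sum,
    ← Finset.sum_neg_distrib, Finset.mul_sum]
  congr! 2
  ring

theorem prod_ite_le_one_sub_cpow_neg_add {ι : Type*} [Fintype ι] [PartialOrder ι] [DecidableLE ι]
    [DecidableLT ι] (hb : b ≠ 0) (u : ι → ℂ) :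
    (∏ i, ∏ j, if i ≤ j then 1 - b ^ (-(u i + u j)) else 1) =
      (∏ i, ∏ j, if i < j then 1 - b ^ (-(u i + u j)) else 1) *
        ((∏ i, (1 + b ^ (-u i))) * ∏ i, (1 - b ^ (-u i))) := by
  have hdiag (i : ι) : 1 - b ^ (-(u i + u i)) = (1 + b ^ (-u i)) * (1 - b ^ (-u i)) := by
    rw [cpow_neg_add hb, ← sq, ← sq_sub_sq, one_pow]
  rw [prod_ite_le_eq_prod_ite_lt_mul_prod_diag fun i j => 1 - b ^ (-(u i + u j)),
    Finset.prod_congr rfl fun i _ => hdiag i, Finset.prod_mul_distrib]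

end CpowNeg

theorem norm_natCast_cpow_neg_lt_one {p : ℕ} (hp : 1 < p) {s : ℂ} (hs : 0 < s.re) :
    ‖(p : ℂ) ^ (-s)‖ < 1 := by
  rw [Complex.norm_natCast_cpow_of_pos (zero_lt_one.trans hp), Complex.neg_re]
  exact Real.rpow_lt_one_of_one_lt_of_neg (mod_cast hp) (neg_lt_zero.mpr hs)

theorem prod_update_zero {n : ℕ} {α M : Type*} [CommMonoid M] (f : Fin (n + 1) → α) (c : α)
    (g : α → M) :
    ∏ i, g (Function.update f 0 c i) = g c * ∏ j : Fin n, g (f j.succ) := by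
  rw [Fin.prod_univ_succ]
  simp only [Function.update_self, Function.update_of_ne (Fin.succ_ne_zero _)]

section NormLtOne

variable {𝕜 : Type*} [NormedRing 𝕜] [NormOneClass 𝕜] {x : 𝕜}

theorem one_sub_ne_zero_of_norm_lt_one (hx : ‖x‖ < 1) : 1 - x ≠ 0 :=
  sub_ne_zero.mpr fun h => hx.ne (h ▸ norm_one)

theorem one_add_ne_zero_of_norm_lt_one (hx : ‖x‖ < 1) : 1 + x ≠ 0 := by
  simpa using one_sub_ne_zero_of_norm_lt_one (x := -x) (by rwa [norm_neg])

end NormLtOne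

theorem even_odd_combination_eq {K : Type*} [Field K] {x : K} (hx : 1 - x ≠ 0)
    (hx' : 1 + x ≠ 0) (y S T : K) :
    (1 - x * y) * (((1 - x)⁻¹ * S + (1 + x)⁻¹ * T) / 2) +
        (y - x) * (((1 - x)⁻¹ * S - (1 + x)⁻¹ * T) / 2) =
      ((1 + y) * S + (1 - y) * T) / 2 := by
  have hplus : (1 - x * y + (y - x)) * (1 - x)⁻¹ = 1 + y := by
    field_simp
    ring
  have hminus : (1 - x * y - (y - x)) * (1 + x)⁻¹ = 1 - y := by
    field_simp
    ring
  linear_combination (S / 2) * hplus + (T / 2) * hminus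

section EulerFactor

variable {p : ℕ}

theorem Bp_eq_prod (hp : p ≠ 0) {u : Fin 4 → ℂ} (hu : ∀ i, ‖(p : ℂ) ^ (-u i)‖ < 1) (a : ℕ) :
    Bp p u a =
      (∏ i, (1 - (p : ℂ) ^ (-u i))⁻¹ + (-1) ^ a * ∏ i, (1 + (p : ℂ) ^ (-u i))⁻¹) / 2 := by
  simpa only [Bp, cpow_neg_sum_mul (Nat.cast_ne_zero.mpr hp)] using
    (hasSum_prod_pow_of_sum_mod_two hu a).tsum_eq

theorem Cp_eq_mul_prod (u : Fin 4 → ℂ) :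
    Cp p u = (∏ i, ∏ j, if i < j then 1 - (p : ℂ) ^ (-(u i + u j)) else 1) *
      ((∏ i, (1 + (p : ℂ) ^ (-u i)) + ∏ i, (1 - (p : ℂ) ^ (-u i))) / 2) := by
  rw [Cp, sum_even_card_prod]

theorem one_sub_cpow_neg_two_mul_g2fun (hp : p ≠ 0) :
    (1 - (p : ℂ) ^ (-(2 : ℂ))) * g2fun p = 1 - 1 / p := by
  have hp0 : (p : ℂ) ≠ 0 := Nat.cast_ne_zero.mpr hp
  have hp1 : (p : ℂ) + 1 ≠ 0 := Nat.cast_add_one_ne_zero p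
  rw [g2fun, Complex.cpow_neg, Complex.cpow_ofNat]
  field_simp
  ring

theorem one_sub_cpow_neg_two_mul_one_sub_g2fun (hp : p ≠ 0) :
    (1 - (p : ℂ) ^ (-(2 : ℂ))) * (1 - g2fun p) = (1 - 1 / p) * (1 / p) := by
  rw [mul_one_sub, one_sub_cpow_neg_two_mul_g2fun hp, Complex.cpow_neg, Complex.cpow_ofNat]
  ring

theorem Bp_combination_eq_prod (hp : p ≠ 0) {u : Fin 4 → ℂ} (hu : ∀ i, ‖(p : ℂ) ^ (-u i)‖ < 1)
    (y : ℂ) :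
    (1 - (p : ℂ) ^ (-u 0) * y) * Bp p u 0 + (y - (p : ℂ) ^ (-u 0)) * Bp p u 1 =
      ((1 + y) * (∏ j : Fin 3, (1 - (p : ℂ) ^ (-u j.succ)))⁻¹ +
        (1 - y) * (∏ j : Fin 3, (1 + (p : ℂ) ^ (-u j.succ)))⁻¹) / 2 := by
  rw [Bp_eq_prod hp hu, Bp_eq_prod hp hu, Fin.prod_univ_succ fun i => (1 - (p : ℂ) ^ (-u i))⁻¹,
    Fin.prod_univ_succ fun i => (1 + (p : ℂ) ^ (-u i))⁻¹, Finset.prod_inv_distrib,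
    Finset.prod_inv_distrib, pow_zero, pow_one, one_mul, neg_one_mul, ← sub_eq_add_neg]
  exact even_odd_combination_eq (one_sub_ne_zero_of_norm_lt_one (hu 0))
    (one_add_ne_zero_of_norm_lt_one (hu 0)) _ _ _

theorem Cp_update_zero (hp : p ≠ 0) {u : Fin 4 → ℂ} (hu : ∀ i, ‖(p : ℂ) ^ (-u i)‖ < 1) {c : ℂ}
    (hc : 1 - ((p : ℂ) ^ (-c)) ^ 2 ≠ 0) :
    Cp p (Function.update u 0 c) =
      (1 - ((p : ℂ) ^ (-c)) ^ 2)⁻¹ *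
        (∏ i, ∏ j, if i ≤ j then
          1 - (p : ℂ) ^ (-(Function.update u 0 c i + Function.update u 0 c j)) else 1) *
        ((1 - (p : ℂ) ^ (-u 0) * (p : ℂ) ^ (-c)) * Bp p u 0 +
          ((p : ℂ) ^ (-c) - (p : ℂ) ^ (-u 0)) * Bp p u 1) := by
  have hplus : ∏ j : Fin 3, (1 + (p : ℂ) ^ (-u j.succ)) ≠ 0 :=
    Finset.prod_ne_zero_iff.mpr fun j _ => one_add_ne_zero_of_norm_lt_one (hu j.succ)
  have hminus : ∏ j : Fin 3, (1 - (p : ℂ) ^ (-u j.succ)) ≠ 0 :=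
    Finset.prod_ne_zero_iff.mpr fun j _ => one_sub_ne_zero_of_norm_lt_one (hu j.succ)
  rw [Cp_eq_mul_prod, prod_ite_le_one_sub_cpow_neg_add (Nat.cast_ne_zero.mpr hp),
    Bp_combination_eq_prod hp hu, prod_update_zero u c fun s => 1 + (p : ℂ) ^ (-s),
    prod_update_zero u c fun s => 1 - (p : ℂ) ^ (-s)]
  field_simp
  ring

end EulerFactor

theorem euler_factor_identity_general (p : ℕ) (hp : 1 < p) (z : Fin 4 → ℂ)
    (hz : ∀ i, -(1 / 2) < (z i).re) (hz0 : (p : ℂ) ^ (-(1 - 2 * z 0)) ≠ 1) :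
    (1 - 1 / (p : ℂ)) * (1 - (p : ℂ) ^ (-(1 - 2 * z 0)))⁻¹ *
        (∏ i : Fin 4, ∏ j : Fin 4,
          if i ≤ j then
            1 - (p : ℂ) ^ (-((Function.update (fun i => 1 / 2 + z i) 0 (1 / 2 - z 0)) i +
              (Function.update (fun i => 1 / 2 + z i) 0 (1 / 2 - z 0)) j))
          else 1) *
        (1 / (p : ℂ) + (1 - 1 / (p : ℂ)) * Bp p (fun i => 1 / 2 + z i) 0 +
          (1 - (p : ℂ) ^ (-(2 * z 0))) * (p : ℂ) ^ (-(1 / 2 - z 0)) *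
            Bp p (fun i => 1 / 2 + z i) 1 -
          (p : ℂ) ^ (-(2 - 2 * z 0))) =
      (1 - (p : ℂ) ^ (-(2 : ℂ))) *
        ((1 - g2fun p) *
            (∏ i : Fin 4, ∏ j : Fin 4,
              if i ≤ j then
                1 - (p : ℂ) ^ (-((Function.update (fun i => 1 / 2 + z i) 0 (1 / 2 - z 0)) i +
                  (Function.update (fun i => 1 / 2 + z i) 0 (1 / 2 - z 0)) j))
              else 1) +
          g2fun p * Cp p (Function.update (fun i => 1 / 2 + z i) 0 (1 / 2 - z 0))) := by
  have hp0 : p ≠ 0 := by lia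
  have hpC : (p : ℂ) ≠ 0 := Nat.cast_ne_zero.mpr hp0
  have hx (i : Fin 4) : ‖(p : ℂ) ^ (-(1 / 2 + z i))‖ < 1 :=
    norm_natCast_cpow_neg_lt_one hp (by simpa [neg_lt_iff_pos_add'] using hz i)
  have hxy : (p : ℂ) ^ (-(1 / 2 + z 0)) * (p : ℂ) ^ (-(1 / 2 - z 0)) = 1 / p := by
    rw [← cpow_neg_add hpC, one_div (p : ℂ), ← Complex.cpow_neg_one]
    ring_nf
  have hy_sq : (p : ℂ) ^ (-(1 - 2 * z 0)) = ((p : ℂ) ^ (-(1 / 2 - z 0))) ^ 2 := by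
    rw [sq, ← cpow_neg_add hpC]
    ring_nf
  have hx_div_y : (p : ℂ) ^ (-(2 * z 0)) * (p : ℂ) ^ (-(1 / 2 - z 0)) =
      (p : ℂ) ^ (-(1 / 2 + z 0)) := by
    rw [← cpow_neg_add hpC]
    ring_nf
  have hy_sq_div : (p : ℂ) ^ (-(2 - 2 * z 0)) = 1 / p * ((p : ℂ) ^ (-(1 / 2 - z 0))) ^ 2 := by
    rw [← hy_sq, one_div (p : ℂ), ← Complex.cpow_neg_one, ← Complex.cpow_add _ _ hpC]
    ring_nf
  have hy : 1 - ((p : ℂ) ^ (-(1 / 2 - z 0))) ^ 2 ≠ 0 := sub_ne_zero.mpr (hy_sq ▸ hz0.symm)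
  have hC := Cp_update_zero hp0 hx hy
  rw [hxy] at hC
  rw [hy_sq, hy_sq_div, one_sub_mul ((p : ℂ) ^ (-(2 * z 0))), hx_div_y]
  generalize Function.update (fun i => 1 / 2 + z i) 0 (1 / 2 - z 0) = v at hC ⊢
  generalize (∏ i, ∏ j, if i ≤ j then 1 - (p : ℂ) ^ (-(v i + v j)) else 1) = Q at hC ⊢
  linear_combination (1 - 1 / (p : ℂ)) * (1 / p) * Q * inv_mul_cancel₀ hy - (1 - 1 / (p : ℂ)) * hC -
    Q * one_sub_cpow_neg_two_mul_one_sub_g2fun hp0 - Cp p v * one_sub_cpow_neg_two_mul_g2fun hp0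

theorem euler_factor_identity (p : ℕ) (hp : p.Prime) (hp2 : p ≠ 2) (z : Fin 4 → ℂ)
    (hz0l : -(1 / 2) < (z 0).re) (hz0r : (z 0).re < 1 / 2)
    (hz : ∀ i, i ≠ 0 → -(1 / 2) < (z i).re) :
    (1 - 1 / (p : ℂ)) * (1 - (p : ℂ) ^ (-(1 - 2 * z 0)))⁻¹ *
        (∏ i : Fin 4, ∏ j : Fin 4,
          if i ≤ j then
            1 - (p : ℂ) ^ (-((Function.update (fun i => 1 / 2 + z i) 0 (1 / 2 - z 0)) i +
              (Function.update (fun i => 1 / 2 + z i) 0 (1 / 2 - z 0)) j))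
          else 1) *
        (1 / (p : ℂ) + (1 - 1 / (p : ℂ)) * Bp p (fun i => 1 / 2 + z i) 0 +
          (1 - (p : ℂ) ^ (-(2 * z 0))) * (p : ℂ) ^ (-(1 / 2 - z 0)) *
            Bp p (fun i => 1 / 2 + z i) 1 -
          (p : ℂ) ^ (-(2 - 2 * z 0))) =
      (1 - (p : ℂ) ^ (-(2 : ℂ))) *
        ((1 - g2fun p) *
            (∏ i : Fin 4, ∏ j : Fin 4,
              if i ≤ j then
                1 - (p : ℂ) ^ (-((Function.update (fun i => 1 / 2 + z i) 0 (1 / 2 - z 0)) i +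
                  (Function.update (fun i => 1 / 2 + z i) 0 (1 / 2 - z 0)) j))
              else 1) +
          g2fun p * Cp p (Function.update (fun i => 1 / 2 + z i) 0 (1 / 2 - z 0))) := by
  have hre : 0 < (1 - 2 * z 0).re := by
    simpa [← lt_div_iff₀'] using hz0r
  exact euler_factor_identity_general p hp.one_lt z (Fin.cases hz0l fun i => hz _ i.succ_ne_zero)
    fun h => (norm_natCast_cpow_neg_lt_one hp.one_lt hre).ne (by rw [h, norm_one])
end
end
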